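/- arXiv:1803.07963 — 2 statements merged into one kernel-verified Lean document; each statement's English description precedes it below -/
import Mathlib

section
/- For all integers n ≥ 3 and k ≥ 2, and all integers i_1 ≥ i_2 ≥ ⋯ ≥ i_k with n−1 ≥ i_1 and i_k ≥ 0, define graphs H_1,…,H_k by H_j = C_{2n} if i_j = n−1 and H_j = P_{2i_j+3} if i_j ≤ n−2. Then GR(H_1,…,H_k) ≥ |H_1| + Σ_{j=2}^{k} i_j, where |H_1| = 2n if i_1 = n−1 and |H_1| = 2i_1+3 otherwise. -/
/-!
Write `H_j` for `evenGraphC n (i j)`, with colors and labels `j` numbered from `0`.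
Put `a j` vertices of label `j` in a set of vertices, where `a 0 = |H_0| - 1` and `a j = i_j` for
`j ≠ 0`, and give each edge the larger of the labels of its ends. The largest label of a triangle
then occurs on two of its edges, so the coloring is Gallai (`isGallai_maxColoring`).

* In color `0` all edges lie among the `|H_0| - 1` vertices of label `0`, while `H_0` has no
  isolated vertex, so there is no room for `H_0`.
* In color `j ≠ 0` the vertices of label `j` form a vertex cover of size `i_j`, while `H_j`
  contains the `i_j + 1` disjoint edges `{2t, 2t + 1}`, so it has no such cover.

Only the spanning path `0, 1, …, |H_j| - 1` of `H_j` and the bound `2 i_j + 2 ≤ |H_j|` are used.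
The argument covers every `N ≤ ∑ a_j`, since the vertices may be any subset of that size.
-/

/-- A Gallai coloring: an edge coloring of the complete graph on `Fin N` with colors
from `Fin k` containing no rainbow triangle. -/
def IsGallai {N k : ℕ} (c : Sym2 (Fin N) → Fin k) : Prop :=
  ∀ x y z : Fin N, x ≠ y → y ≠ z → x ≠ z →
    c s(x, y) = c s(y, z) ∨ c s(y, z) = c s(x, z) ∨ c s(x, y) = c s(x, z)

/-- The coloring `c` of the complete graph on `Fin N` contains a copy of the graph `H`
all of whose edges have color `i`. -/
def HasMonoCopy {N k V : ℕ} (c : Sym2 (Fin N) → Fin k)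
    (H : SimpleGraph (Fin V)) (i : Fin k) : Prop :=
  ∃ f : Fin V → Fin N, Function.Injective f ∧ ∀ u v, H.Adj u v → c s(f u, f v) = i

/-- Every Gallai k-coloring of the complete graph on `N` vertices contains a
monochromatic copy of `(H i)` in color `i` for some color `i`. -/
def GallaiRamseyProp {k : ℕ} (H : Fin k → Σ V : ℕ, SimpleGraph (Fin V)) (N : ℕ) : Prop :=
  ∀ c : Sym2 (Fin N) → Fin k, IsGallai c → ∃ i : Fin k, HasMonoCopy c (H i).2 i

/-- For `m ≤ n - 1`: the cycle `C_{2n}` if `m = n - 1`, and the path `P_{2m+3}` otherwise,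
together with its number of vertices. -/
def evenGraphC (n m : ℕ) : Σ V : ℕ, SimpleGraph (Fin V) :=
  if m = n - 1 then ⟨2 * n, SimpleGraph.cycleGraph (2 * n)⟩
  else ⟨2 * m + 3, SimpleGraph.pathGraph (2 * m + 3)⟩

/-- The edge coloring induced by a vertex labelling: an edge gets the larger label of its ends. -/
def maxColoring {N k : ℕ} (l : Fin N → Fin k) : Sym2 (Fin N) → Fin k :=
  Sym2.lift ⟨fun u v => max (l u) (l v), fun u v => max_comm (l u) (l v)⟩

theorem maxColoring_mk {N k : ℕ} (l : Fin N → Fin k) (u v : Fin N) :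
    maxColoring l s(u, v) = max (l u) (l v) := rfl

theorem isGallai_maxColoring {N k : ℕ} (l : Fin N → Fin k) : IsGallai (maxColoring l) := by
  intro x y z _ _ _
  simp only [maxColoring_mk]
  grind

theorem evenGraphC_card_ge {n : ℕ} (hn : 3 ≤ n) (m : ℕ) : 2 * m + 2 ≤ (evenGraphC n m).1 := by
  unfold evenGraphC
  split_ifs <;> dsimp only <;> omega

/-- The vertices in their natural order form a spanning path of `evenGraphC n m`. -/
theorem evenGraphC_adj (n m : ℕ) (u v : Fin (evenGraphC n m).1)
    (h : u.val + 1 = v.val) : (evenGraphC n m).2.Adj u v := by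
  revert u v
  by_cases hm : m = n - 1
  · rw [show evenGraphC n m = ⟨2 * n, SimpleGraph.cycleGraph (2 * n)⟩ from if_pos hm]
    intro u v h
    exact SimpleGraph.pathGraph_le_cycleGraph (SimpleGraph.pathGraph_adj.2 (Or.inl h))
  · rw [show evenGraphC n m = ⟨2 * m + 3, SimpleGraph.pathGraph (2 * m + 3)⟩ from if_neg hm]
    intro u v h
    exact SimpleGraph.pathGraph_adj.2 (Or.inl h)

/-- The disjoint edges `{2t, 2t + 1}` for `t ≤ m` force every vertex cover of `evenGraphC n m` to
have more than `m` vertices. -/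
theorem lt_card_of_cover {n : ℕ} (hn : 3 ≤ n) (m : ℕ) (S : Finset (Fin (evenGraphC n m).1))
    (hS : ∀ u v, (evenGraphC n m).2.Adj u v → u ∈ S ∨ v ∈ S) : m < S.card := by
  have hV := evenGraphC_card_ge hn m
  have hsub : Finset.range (m + 1) ⊆ S.image (fun u => u.val / 2) := by
    intro t ht
    rw [Finset.mem_range] at ht
    rw [Finset.mem_image]
    rcases hS ⟨2 * t, by omega⟩ ⟨2 * t + 1, by omega⟩ (evenGraphC_adj n m _ _ rfl) with h | h
    · exact ⟨_, h, by dsimp only; omega⟩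
    · exact ⟨_, h, by dsimp only; omega⟩
  have h1 := Finset.card_le_card hsub
  rw [Finset.card_range] at h1
  exact Nat.lt_of_succ_le (h1.trans Finset.card_image_le)

theorem evenGraphC_exists_adj {n : ℕ} (hn : 3 ≤ n) (m : ℕ) (u : Fin (evenGraphC n m).1) :
    ∃ v, (evenGraphC n m).2.Adj u v := by
  have hV := evenGraphC_card_ge hn m
  have hu := u.isLt
  by_cases h : u.val + 1 < (evenGraphC n m).1
  · exact ⟨⟨u.val + 1, h⟩, evenGraphC_adj n m _ _ rfl⟩
  · exact ⟨⟨u.val - 1, by omega⟩, (evenGraphC_adj n m _ _ (by dsimp only; omega)).symm⟩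

/-- If there are at most `∑ j, a j` vertices, they can be labelled so that each label `j` is used
at most `a j` times. -/
theorem exists_labelling {N k : ℕ} (a : Fin k → ℕ) (h : N ≤ ∑ j, a j) :
    ∃ l : Fin N → Fin k, ∀ j, (Finset.univ.filter (fun u => l u = j)).card ≤ a j := by
  have hc : Fintype.card (Fin N) ≤ Fintype.card (Σ j, Fin (a j)) := by simpa using h
  obtain ⟨e⟩ := Function.Embedding.nonempty_of_card_le hc
  refine ⟨fun u => (e u).1, fun j => ?_⟩
  have hsub : (Finset.univ.filter (fun u => (e u).1 = j)).map e ⊆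
      (Finset.univ : Finset (Fin (a j))).map (Function.Embedding.sigmaMk j) := by
    intro p hp
    simp only [Finset.mem_map, Finset.mem_filter, Finset.mem_univ, true_and] at hp ⊢
    obtain ⟨u, rfl, rfl⟩ := hp
    exact ⟨(e u).2, rfl⟩
  simpa using Finset.card_le_card hsub

theorem stmt_0 (n k : ℕ) (hn : 3 ≤ n) (hk : 2 ≤ k) (i : Fin k → ℕ)
    (hanti : Antitone i) (hi1 : i ⟨0, by omega⟩ ≤ n - 1) :
    ∀ N : ℕ, 0 < N → GallaiRamseyProp (fun j => evenGraphC n (i j)) N →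
      (evenGraphC n (i ⟨0, by omega⟩)).1 +
        ∑ j ∈ Finset.univ.erase (⟨0, by omega⟩ : Fin k), i j ≤ N := by
  intro N _ hG
  by_contra! hlt
  set z : Fin k := ⟨0, by omega⟩ with hz
  let a : Fin k → ℕ := Function.update i z ((evenGraphC n (i z)).1 - 1)
  have hVz := evenGraphC_card_ge hn (i z)
  have haz : a z = (evenGraphC n (i z)).1 - 1 := Function.update_self ..
  have haj : ∀ j, j ≠ z → a j = i j := fun j hj => Function.update_of_ne hj ..
  have hsum : N ≤ ∑ j, a j := by
    have hrest : ∑ j ∈ Finset.univ.erase z, a j = ∑ j ∈ Finset.univ.erase z, i j :=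
      Finset.sum_congr rfl (fun j hj => haj j (Finset.ne_of_mem_erase hj))
    rw [← Finset.add_sum_erase _ _ (Finset.mem_univ z), haz, hrest]
    omega
  obtain ⟨l, hl⟩ := exists_labelling a hsum
  obtain ⟨j, f, hf, hcol⟩ := hG (maxColoring l) (isGallai_maxColoring l)
  simp only [maxColoring_mk] at hcol
  -- The vertices of the copy carrying label `j`.
  let S := Finset.univ.filter (fun u => l (f u) = j)
  have hS : S.card ≤ a j := by
    refine le_trans ?_ (hl j)
    rw [← Finset.card_image_of_injective S hf]
    apply Finset.card_le_card
    intro w hw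
    obtain ⟨u, hu, rfl⟩ := Finset.mem_image.1 hw
    simpa [S] using hu
  by_cases hj : j = z
  · subst hj
    -- A maximum of labels equal to the least label forces both labels to be least.
    have huniv : S = Finset.univ := by
      apply Finset.filter_true_of_mem
      intro u _
      obtain ⟨v, huv⟩ := evenGraphC_exists_adj hn _ u
      have h1 : l (f u) ≤ z := (le_max_left _ _).trans (hcol u v huv).le
      exact le_antisymm h1 (by rw [hz]; exact Nat.zero_le _)
    rw [huniv, Finset.card_univ, Fintype.card_fin, haz] at hS
    dsimp only at hS
    omega
  · rw [haj j hj] at hS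
    refine absurd (lt_card_of_cover hn (i j) S fun u v huv => ?_) hS.not_gt
    rcases max_choice (l (f u)) (l (f v)) with h | h
    · exact Or.inl (Finset.mem_filter.2 ⟨Finset.mem_univ _, h.symm.trans (hcol u v huv)⟩)
    · exact Or.inr (Finset.mem_filter.2 ⟨Finset.mem_univ _, h.symm.trans (hcol u v huv)⟩)
end

section
/- For every integer k ≥ 2 and all integers 2 ≥ i_1 ≥ i_2 ≥ ⋯ ≥ i_k ≥ 0, define graphs H_1,…,H_k by H_j = C_6 if i_j = 2, H_j = P_5 if i_j = 1, and H_j = P_3 if i_j = 0. Then GR(H_1,…,H_k) = |H_1| + Σ_{j=2}^{k} i_j, where |H_1| is the number of vertices of H_1. -/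
/-- The cycle `C₆` if `m = 2`, the path `P₅` if `m = 1`, and the path `P₃` if `m = 0`. -/
def graphN3 (m : ℕ) : Σ V : ℕ, SimpleGraph (Fin V) :=
  if m = 2 then ⟨6, SimpleGraph.cycleGraph 6⟩
  else ⟨2 * m + 3, SimpleGraph.pathGraph (2 * m + 3)⟩

namespace GallaiRamsey

/-! ### Forbidden subgraphs as vertex lists -/

/-- Number of vertices of the graph with index `m`: `P₃`, `P₅`, `C₆` for `m = 0, 1, 2`; every
larger index stands for the auxiliary path `P₆`. -/
def order : ℕ → ℕ
  | 0 => 3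
  | 1 => 5
  | _ => 6

/-- The closed walk through the list for index `2` (the cycle), the list itself otherwise. -/
def closeUp {α : Type*} (m : ℕ) (p : List α) : List α :=
  match m, p with
  | 2, x :: t => x :: t ++ [x]
  | _, p => p

/-- The coloring `c` has, inside the vertex set `S`, a copy in color `j` of the graph with index
`m` (see `order`), given by listing its vertices along the path or around the cycle. -/
def Has {V K : Type*} (c : V → V → K) (S : Finset V) (j : K) (m : ℕ) : Prop :=
  ∃ p : List V, p.length = order m ∧ p.Nodup ∧ (∀ v ∈ p, v ∈ S) ∧
    (closeUp m p).IsChain fun u v => c u v = j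

/-! ### A verified backtracking search for three-colorings of at most eight vertices -/

/-- The one-bit mask of the statement that the edge `xy` has color `c`, for `x, y < 8`, `c < 3`. -/
def lit (x y c : ℕ) : ℕ :=
  2 ^ cond (Nat.blt x y) (3 * (8 * x + y) + c) (3 * (8 * y + x) + c)

/-- The mask of the statement that all edges of the walk have color `c`. -/
def walkMask (c : ℕ) : List ℕ → ℕ
  | x :: y :: t => Nat.lor (lit x y c) (walkMask c (y :: t))
  | _ => 0

/-- The mask of the statement that `xy`, `yz`, `xz` have colors `0`, `1`, `2`. -/
def rainbowMask : List ℕ → ℕ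
  | [x, y, z] => Nat.lor (lit x y 0) (Nat.lor (lit y z 1) (lit x z 2))
  | _ => 0

/-- The mask of all three literals of the edge `xy`. -/
def edgeMask (x y : ℕ) : ℕ := Nat.lor (lit x y 0) (Nat.lor (lit x y 1) (lit x y 2))

/-- The last `L` decimal digits of `v`, least significant first. -/
def digitList : ℕ → ℕ → List ℕ
  | 0, _ => []
  | L + 1, v => v % 10 :: digitList L (v / 10)

/-- The list consists of distinct labels below `n`. -/
def isSeq (n : ℕ) : List ℕ → Bool
  | [] => true
  | x :: t => (Nat.blt x n && t.all fun y => !Nat.beq x y) && isSeq n t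

/-- The lists of `L` distinct labels below `n` among those written as decimal numbers in `vs`. -/
def decode (n L : ℕ) (vs : List ℕ) : List (List ℕ) := (vs.map (digitList L)).filter (isSeq n)

/-- The masks of the copies, in color `c`, of the graph with index `m` listed in `vs`. -/
def forb (n c m : ℕ) (vs : List ℕ) : List ℕ :=
  (decode n (order m) vs).map fun p => walkMask c (closeUp m p)

/-- The data guiding a search: the order in which edges are colored, and the configurations used
to prune. Vertex sequences are written as decimal numbers, e.g. `102` for the sequence `2, 0, 1`.
Nothing about this data is trusted: listing too few configurations can only make the search fail. -/
structure Cert where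
  /-- the edges to be colored, in this order -/
  edges : List (ℕ × ℕ)
  /-- sequences `x, y, z` such that `xy`, `yz`, `xz` must not get colors `0`, `1`, `2` -/
  rainbow : List ℕ
  /-- copies of `P₃` forbidden in color `2` -/
  two : List ℕ
  /-- copies of the graph forbidden in color `0` -/
  zero : List ℕ
  /-- copies of the graph forbidden in color `1` -/
  one : List ℕ

/-- The masks of all forbidden configurations of `C`, when the graphs with indices `a`, `b` are
forbidden in colors `0`, `1`, and `P₃` in color `2`. -/
def nogoods (n a b : ℕ) (C : Cert) : List ℕ :=
  forb n 2 0 C.two ++ (decode n 3 C.rainbow).map rainbowMask ++ forb n 0 a C.zero ++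
    forb n 1 b C.one

/-- The masks `k` and `m` have a common bit. -/
def meets (k m : ℕ) : Bool := Nat.ble 1 (Nat.land m k)

/-- A search plan: for each edge its three possible literals, each with the forbidden masks that
can become violated when it is chosen. The edges come in reverse order, so that a mask is attached
to the last of its edges; `acc` accumulates the plan. -/
def levels : List (ℕ × ℕ) → List ℕ → List (List (ℕ × List ℕ)) → List (List (ℕ × List ℕ))
  | [], _, acc => acc
  | e :: es, N, acc =>
    levels es (N.filter fun m => !meets (edgeMask e.1 e.2) m)
      ([0, 1, 2].map (fun c => (lit e.1 e.2 c,
        (N.filter (meets (edgeMask e.1 e.2))).filter (meets (lit e.1 e.2 c)))) :: acc)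

/-- Backtracking: every way of extending the partial coloring `s` along the plan violates one of
the forbidden masks. -/
def refute : List (List (ℕ × List ℕ)) → ℕ → Bool
  | [], _ => false
  | o :: r, s => o.all fun p =>
      (p.2.any fun m => Nat.beq (Nat.land m (Nat.lor s p.1)) m) || refute r (Nat.lor s p.1)

/-- The search on `n` vertices, starting from the walk `w` in color `1`. Masks giving an edge
of `w` another color are discarded beforehand. -/
def run (n a b : ℕ) (w : List ℕ) (C : Cert) : Bool :=
  refute (levels C.edges.reverse ((nogoods n a b C).filter fun m =>
    !meets (Nat.lor (walkMask 0 w) (walkMask 2 w)) m) []) (walkMask 1 w)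

/-- Bit `i = 3 * (8 * x + y) + c` says that the edge `xy` has color `c` under `d`. -/
def Lit (d : ℕ → ℕ → ℕ) (i : ℕ) : Prop := d (i / 3 / 8) (i / 3 % 8) = i % 3

/-- All statements encoded by the mask `m` hold for the coloring `d`. -/
def Sat (d : ℕ → ℕ → ℕ) (m : ℕ) : Prop := ∀ i, m.testBit i = true → Lit d i

theorem sat_zero (d : ℕ → ℕ → ℕ) : Sat d 0 := by
  intro i h; simp at h

theorem sat_lor (d : ℕ → ℕ → ℕ) (a b : ℕ) : Sat d (Nat.lor a b) ↔ Sat d a ∧ Sat d b := by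
  have h : ∀ i, (Nat.lor a b).testBit i = (a.testBit i || b.testBit i) :=
    fun i => Nat.testBit_lor a b i
  constructor
  · intro hs
    exact ⟨fun i hi => hs i (by rw [h, hi]; rfl), fun i hi => hs i (by rw [h, hi]; simp)⟩
  · rintro ⟨ha, hb⟩ i hi
    rw [h, Bool.or_eq_true] at hi
    exact hi.elim (ha i) (hb i)

theorem sat_two_pow (d : ℕ → ℕ → ℕ) (i : ℕ) : Sat d (2 ^ i) ↔ Lit d i := by
  constructor
  · intro h; exact h i (by simp)
  · intro h j hj
    rw [Nat.testBit_two_pow] at hj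
    have : i = j := by simpa using hj
    exact this ▸ h

theorem sat_lit {d : ℕ → ℕ → ℕ} (hd : ∀ x y, d x y = d y x) {x y c : ℕ} (hx : x < 8) (hy : y < 8)
    (hc : c < 3) : Sat d (lit x y c) ↔ d x y = c := by
  have key : ∀ u v, u < 8 → v < 8 → (Sat d (2 ^ (3 * (8 * u + v) + c)) ↔ d u v = c) := by
    intro u v hu hv
    rw [sat_two_pow, Lit]
    have h1 : (3 * (8 * u + v) + c) / 3 / 8 = u := by omega
    have h2 : (3 * (8 * u + v) + c) / 3 % 8 = v := by omega
    have h3 : (3 * (8 * u + v) + c) % 3 = c := by omega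
    rw [h1, h2, h3]
  unfold lit
  cases Nat.blt x y
  · rw [cond_false, key y x hy hx, hd]
  · rw [cond_true, key x y hx hy]

theorem exists_sat_lit {d : ℕ → ℕ → ℕ} (hd : ∀ x y, d x y < 3) (x y : ℕ) :
    ∃ c ∈ [0, 1, 2], Sat d (lit x y c) := by
  have key : ∀ q, ∃ c ∈ [0, 1, 2], Sat d (2 ^ (3 * q + c)) := by
    intro q
    refine ⟨d (q / 8) (q % 8), ?_, ?_⟩
    · have := hd (q / 8) (q % 8)
      simp only [List.mem_cons, List.not_mem_nil, or_false]; omega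
    · have := hd (q / 8) (q % 8)
      rw [sat_two_pow, Lit]
      have h1 : (3 * q + d (q / 8) (q % 8)) / 3 = q := by omega
      rw [h1]; omega
  unfold lit
  cases Nat.blt x y
  · exact key _
  · exact key _

theorem sat_of_land {d : ℕ → ℕ → ℕ} {m s : ℕ} (h : Nat.beq (Nat.land m s) m = true)
    (hs : Sat d s) : Sat d m := by
  intro i hi
  have h1 : Nat.land m s = m := Nat.eq_of_beq_eq_true h
  have h2 : (Nat.land m s).testBit i = (m.testBit i && s.testBit i) := Nat.testBit_land m s i
  rw [h1, hi] at h2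
  exact hs i (by simpa using h2.symm)

theorem refute_sound {d : ℕ → ℕ → ℕ} : ∀ (L : List (List (ℕ × List ℕ))) (s : ℕ), Sat d s →
    (∀ o ∈ L, (∃ p ∈ o, Sat d p.1) ∧ ∀ p ∈ o, ∀ m ∈ p.2, ¬ Sat d m) → refute L s = true → False
  | [], _, _, _, h => by simp [refute] at h
  | o :: r, s, hs, hL, h => by
    obtain ⟨⟨p, hp, hps⟩, hbad⟩ := hL o (by simp)
    rw [refute, List.all_eq_true] at h
    have h1 := h p hp
    have hs' : Sat d (Nat.lor s p.1) := (sat_lor _ _ _).2 ⟨hs, hps⟩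
    rw [Bool.or_eq_true, List.any_eq_true] at h1
    rcases h1 with ⟨m, hm, hm'⟩ | h1
    · exact hbad p hp m hm (sat_of_land hm' hs')
    · exact refute_sound r _ hs' (fun o' ho' => hL o' (by simp [ho'])) h1

theorem levels_good {d : ℕ → ℕ → ℕ} (hd : ∀ x y, d x y < 3) :
    ∀ (es : List (ℕ × ℕ)) (N : List ℕ) (acc : List (List (ℕ × List ℕ))),
    (∀ m ∈ N, ¬ Sat d m) →
    (∀ o ∈ acc, (∃ p ∈ o, Sat d p.1) ∧ ∀ p ∈ o, ∀ m ∈ p.2, ¬ Sat d m) →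
    ∀ o ∈ levels es N acc, (∃ p ∈ o, Sat d p.1) ∧ ∀ p ∈ o, ∀ m ∈ p.2, ¬ Sat d m
  | [], _, _, _, hacc => hacc
  | e :: es, N, acc, hN, hacc => by
    rw [levels]
    refine levels_good hd es _ _ (fun m hm => hN m (List.mem_filter.1 hm).1) ?_
    intro o ho
    rcases List.mem_cons.1 ho with rfl | ho
    · constructor
      · obtain ⟨c, hc, hsat⟩ := exists_sat_lit hd e.1 e.2
        exact ⟨_, List.mem_map.2 ⟨c, hc, rfl⟩, hsat⟩
      · intro p hp m hm
        obtain ⟨c, -, rfl⟩ := List.mem_map.1 hp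
        exact hN m (List.mem_filter.1 (List.mem_filter.1 hm).1).1
    · exact hacc o ho

theorem sat_walkMask {d : ℕ → ℕ → ℕ} (hd : ∀ x y, d x y = d y x) {c : ℕ} (hc : c < 3) :
    ∀ w : List ℕ, (∀ x ∈ w, x < 8) →
      (Sat d (walkMask c w) ↔ w.IsChain fun x y => d x y = c)
  | [], _ => by simp [walkMask, sat_zero]
  | [x], _ => by simp [walkMask, sat_zero]
  | x :: y :: t, h => by
    rw [walkMask, sat_lor, List.isChain_cons_cons,
      sat_lit hd (h x (by simp)) (h y (by simp)) hc,
      sat_walkMask hd hc (y :: t) (fun z hz => h z (by simp [hz]))]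

theorem length_digitList : ∀ L v, (digitList L v).length = L
  | 0, _ => rfl
  | L + 1, v => by rw [digitList, List.length_cons, length_digitList]

theorem isSeq_iff (n : ℕ) : ∀ p, isSeq n p = true ↔ p.Nodup ∧ ∀ x ∈ p, x < n
  | [] => by simp [isSeq]
  | x :: t => by
    have hb : ∀ y, Nat.beq x y = decide (x = y) := fun y => by
      rw [Bool.eq_iff_iff, Nat.beq_eq, decide_eq_true_iff]
    have hl : Nat.blt x n = true ↔ x < n := Nat.blt_eq ▸ Iff.rfl
    rw [isSeq, Bool.and_eq_true, isSeq_iff n t, Bool.and_eq_true, hl, List.all_eq_true]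
    simp only [hb, List.nodup_cons, List.forall_mem_cons, Bool.not_eq_true',
      decide_eq_false_iff_not]
    constructor
    · rintro ⟨⟨h1, h2⟩, h3, h4⟩
      exact ⟨⟨fun hx => h2 x hx rfl, h3⟩, h1, h4⟩
    · rintro ⟨⟨h1, h2⟩, h3, h4⟩
      exact ⟨⟨h3, fun y hy hxy => h1 (hxy ▸ hy)⟩, h2, h4⟩

theorem mem_decode {n L : ℕ} {vs : List ℕ} {p : List ℕ} (hp : p ∈ decode n L vs) :
    p.length = L ∧ p.Nodup ∧ ∀ x ∈ p, x < n := by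
  obtain ⟨h1, h2⟩ := List.mem_filter.1 hp
  obtain ⟨v, -, rfl⟩ := List.mem_map.1 h1
  exact ⟨length_digitList L v, (isSeq_iff n _).1 h2⟩

theorem closeUp_map {α β : Type*} (f : α → β) (m : ℕ) (p : List α) :
    closeUp m (p.map f) = (closeUp m p).map f := by
  rcases p with _ | ⟨x, t⟩
  · rcases m with _ | _ | _ | m <;> rfl
  · rcases m with _ | _ | _ | m <;> simp [closeUp]

theorem mem_closeUp {α : Type*} {m : ℕ} {p : List α} {x : α} (h : x ∈ closeUp m p) : x ∈ p := by
  rcases p with _ | ⟨y, t⟩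
  · rcases m with _ | _ | _ | m <;> simp [closeUp] at h
  · rcases m with _ | _ | _ | m <;> simp [closeUp] at h ⊢ <;> tauto

theorem has_of_forb {V : Type*} {c : V → V → ℕ} (hsym : ∀ x y, c x y = c y x) {S : Finset V} {e : ℕ → V}
    {n : ℕ} (hn : n ≤ 8) (heS : ∀ i < n, e i ∈ S) (he : ∀ i < n, ∀ j < n, e i = e j → i = j)
    {j a : ℕ} (hj : j < 3) {vs : List ℕ} {m : ℕ} (hm : m ∈ forb n j a vs)
    (hsat : Sat (fun x y => c (e x) (e y)) m) : Has c S j a := by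
  obtain ⟨p, hp, rfl⟩ := List.mem_map.1 hm
  obtain ⟨hlen, hnd, hlt⟩ := mem_decode hp
  rw [sat_walkMask (fun x y => hsym _ _) hj _
    (fun x hx => (hlt x (mem_closeUp hx)).trans_le hn)] at hsat
  refine ⟨p.map e, by simpa using hlen, ?_, ?_, ?_⟩
  · exact hnd.map_on fun x hx y hy => he x (hlt x hx) y (hlt y hy)
  · intro v hv
    obtain ⟨x, hx, rfl⟩ := List.mem_map.1 hv
    exact heS x (hlt x hx)
  · rw [closeUp_map, List.isChain_map]
    exact hsat

/-- A list of distinct elements of `S` extends to one of any length up to `S.card`. -/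
theorem exists_extension {V : Type*} [DecidableEq V] {S : Finset V} {q : List V} (hq : q.Nodup)
    (hqS : ∀ v ∈ q, v ∈ S) {n : ℕ} (hqn : q.length ≤ n) (hn : n ≤ S.card) :
    ∃ t : List V, (q ++ t).Nodup ∧ (∀ v ∈ q ++ t, v ∈ S) ∧ (q ++ t).length = n := by
  have hsub : q.toFinset ⊆ S := fun v hv => hqS v (List.mem_toFinset.1 hv)
  have hcard : (S \ q.toFinset).card = S.card - q.length := by
    rw [Finset.card_sdiff_of_subset hsub, List.toFinset_card_of_nodup hq]
  obtain ⟨T, hT, hTc⟩ := Finset.exists_subset_card_eq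
    (show n - q.length ≤ (S \ q.toFinset).card by omega)
  refine ⟨T.toList, ?_, ?_, ?_⟩
  · refine List.nodup_append.2 ⟨hq, T.nodup_toList, ?_⟩
    rintro a ha b hb rfl
    have := Finset.mem_sdiff.1 (hT (Finset.mem_toList.1 hb))
    exact this.2 (List.mem_toFinset.2 ha)
  · intro v hv
    rcases List.mem_append.1 hv with h | h
    · exact hqS v h
    · exact (Finset.mem_sdiff.1 (hT (Finset.mem_toList.1 h))).1
  · rw [List.length_append, Finset.length_toList, hTc]; omega

/-- No triangle has three different colors. -/
def NoRainbow {V K : Type*} (c : V → V → K) : Prop :=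
  ∀ x y z, x ≠ y → y ≠ z → x ≠ z → c x y = c y z ∨ c y z = c x z ∨ c x y = c x z

/-- A successful search, started from a path `q` in color `1`, proves that one of the graphs with
indices `a` in color `0`, `b` in color `1`, or `P₃` in color `2` is present. -/
theorem search_sound {V : Type*} [DecidableEq V] {c : V → V → ℕ} (hsym : ∀ x y, c x y = c y x)
    (hlt : ∀ x y, c x y < 3) (hg : NoRainbow c) {S : Finset V} {n a b : ℕ} (hn : n ≤ 8)
    (hn0 : 0 < n) (hcard : n ≤ S.card) {q : List V} (hq : q.Nodup) (hqS : ∀ v ∈ q, v ∈ S)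
    (hqc : q.IsChain fun u v => c u v = 1) (hqn : q.length ≤ n) (C : Cert)
    (hrun : run n a b (List.range q.length) C = true) :
    Has c S 0 a ∨ Has c S 1 b ∨ Has c S 2 0 := by
  obtain ⟨t, hnd, hS, hlen⟩ := exists_extension hq hqS hqn hcard
  obtain ⟨v₀, -⟩ : S.Nonempty := Finset.card_pos.1 (hn0.trans_le hcard)
  set e : ℕ → V := fun i => (q ++ t).getD i v₀ with he
  have hget : ∀ i (h : i < (q ++ t).length), e i = (q ++ t)[i] := fun i h => by
    exact List.getD_eq_getElem _ _ h
  have heS : ∀ i < n, e i ∈ S := fun i hi => by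
    rw [hget i (by omega)]; exact hS _ (List.getElem_mem _)
  have hinj : ∀ i < n, ∀ j < n, e i = e j → i = j := fun i hi j hj h => by
    rw [hget i (by omega), hget j (by omega)] at h
    exact (hnd.getElem_inj_iff).1 h
  by_contra! hno
  obtain ⟨h0, h1, h2⟩ := hno
  have hsym' : ∀ x y, c (e x) (e y) = c (e y) (e x) := fun x y => hsym _ _
  refine refute_sound (d := fun x y => c (e x) (e y)) _ _ ?_ ?_ hrun
  · rw [sat_walkMask hsym' (by norm_num) _ (fun x hx => by
      have := List.mem_range.1 hx; omega), ← List.isChain_map (R := fun u v => c u v = 1) e]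
    have : (List.range q.length).map e = q := by
      apply List.ext_getElem (by simp)
      intro i hi hi'
      rw [List.getElem_map, List.getElem_range,
        hget i (by rw [List.length_append]; omega), List.getElem_append_left hi']
    rwa [this]
  · refine levels_good (fun x y => hlt _ _) _ _ _ ?_ (by simp)
    intro m hm hsat
    have hm := (List.mem_filter.1 hm).1
    simp only [nogoods, List.mem_append] at hm
    rcases hm with ((hm | hm) | hm) | hm
    · exact h2 (has_of_forb hsym hn heS hinj (by norm_num) hm hsat)
    · obtain ⟨p, hp, rfl⟩ := List.mem_map.1 hm
      obtain ⟨hlen, hnd, hl⟩ := mem_decode hp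
      match p, hlen with
      | [x, y, z], _ =>
        simp only [List.mem_cons, List.not_mem_nil, or_false, forall_eq_or_imp, forall_eq] at hl
        obtain ⟨hx, hy, hz⟩ := hl
        rw [rainbowMask, sat_lor, sat_lor, sat_lit hsym' (by omega) (by omega) (by omega),
          sat_lit hsym' (by omega) (by omega) (by omega),
          sat_lit hsym' (by omega) (by omega) (by omega)] at hsat
        simp only [List.nodup_cons, List.mem_cons, List.not_mem_nil, or_false, not_or] at hnd
        have := hg (e x) (e y) (e z) (fun h => hnd.1.1 (hinj x hx y hy h))
          (fun h => hnd.2.1 (hinj y hy z hz h)) (fun h => hnd.1.2 (hinj x hx z hz h))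
        omega
    · exact h0 (has_of_forb hsym hn heS hinj (by norm_num) hm hsat)
    · exact h1 (has_of_forb hsym hn heS hinj (by norm_num) hm hsat)

/-- Search data on `3` vertices, forbidding `P₃` in all colors. -/
def cert00 : Cert :=
  ⟨
    [(0, 1), (1, 2), (0, 2)],
    [012, 021, 102, 120, 201, 210],
    [012, 021, 102],
    [012, 021, 102],
    [012, 021, 102]⟩

/-- Search data on `5` vertices, forbidding `P₅` and `P₃` in colors `0` and `1`. -/
def cert10 : Cert :=
  ⟨
    [(0, 1), (1, 2), (0, 2), (1, 3), (2, 3), (0, 4), (1, 4), (2, 4), (0, 3), (3, 4)],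
    [012, 014, 021, 024, 041, 042, 102, 120, 123, 132, 201, 210, 213, 231, 312, 321, 401, 402,
    410, 420],
    [012, 013, 014, 021, 023, 024, 041, 042, 102, 104, 123, 132, 204, 213, 314, 324],
    [14023, 23104, 24013, 31024, 31204, 32014, 32104],
    [012, 013, 014, 021, 023, 024, 041, 042, 102, 104, 123, 132, 204, 213, 314, 324]⟩

/-- Search data on `6` vertices, forbidding `C₆` and `P₃` in colors `0` and `1`. -/
def cert20 : Cert :=
  ⟨
    [(0, 1), (1, 2), (0, 2), (2, 3), (0, 3), (1, 3), (2, 4), (0, 4), (3, 4), (3, 5), (1, 5),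
    (2, 5), (0, 5), (1, 4), (4, 5)],
    [012, 013, 021, 023, 024, 031, 032, 034, 042, 043, 102, 103, 105, 120, 123, 125, 130, 132,
    135, 150, 152, 153, 201, 203, 204, 210, 213, 230, 231, 234, 235, 240, 243, 253, 301, 302,
    304, 310, 312, 315, 320, 321, 324, 325, 340, 342, 351, 352, 402, 403, 420, 423, 430, 432,
    501, 510, 512, 513, 521, 523, 531, 532],
    [012, 013, 015, 021, 023, 024, 031, 032, 034, 035, 042, 043, 051, 102, 103, 104, 105, 123,
    124, 125, 132, 134, 135, 152, 153, 203, 204, 213, 215, 234, 235, 243, 253, 304, 315, 324,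
    325, 405, 425, 435],
    [012435, 012534, 013524, 015243, 015324, 015342, 021534, 024315, 025134, 031524, 035124],
    [012, 013, 015, 021, 023, 024, 031, 032, 034, 035, 042, 043, 051, 102, 103, 104, 105, 123,
    124, 125, 132, 134, 135, 152, 153, 203, 204, 213, 215, 234, 235, 243, 253, 304, 315, 324,
    325, 405, 425, 435]⟩

/-- Search data on `6` vertices, forbidding `P₅` in colors `0` and `1`, from a `P₃` in color `1`. -/
def cert11 : Cert :=
  ⟨
    [(2, 3), (3, 4), (2, 4), (0, 3), (3, 5), (0, 5), (4, 5), (2, 5), (1, 5), (0, 4), (1, 3),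
    (1, 4), (0, 2)],
    [015, 035, 043, 053, 105, 125, 234, 235, 243, 254, 305, 324, 342, 350, 423, 425, 432, 435,
    452, 453, 503, 524, 530, 534, 543],
    [032, 034, 035, 043, 051, 052, 053, 054, 152, 234, 235, 243, 245, 253, 254, 304, 305, 324,
    325, 345, 354, 425, 435],
    [03452, 03524, 03542, 05324, 05342, 05432, 15034, 15043, 15243, 15304, 15324, 15432, 24305,
    25043, 25304, 42305],
    [01234, 01235, 01243, 01245, 01254, 01524, 21034, 21035, 21053, 21054, 21503, 30124, 30125,
    32104, 32105, 42105]⟩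

/-- Search data on `7` vertices, forbidding `P₅` and `C₆` in colors `0` and `1`, from a `P₅` in
color `1`. -/
def cert12 : Cert :=
  ⟨
    [(4, 5), (0, 5), (0, 4), (3, 5), (0, 6), (4, 6), (1, 6), (5, 6), (1, 5), (3, 6), (2, 5),
    (2, 6), (0, 2), (1, 3), (2, 4), (1, 4), (0, 3)],
    [015, 016, 045, 046, 052, 054, 056, 062, 064, 065, 105, 106, 125, 126, 156, 165, 205, 206,
    215, 216, 235, 236, 250, 256, 260, 265, 325, 326, 345, 346, 356, 365, 405, 406, 435, 436,
    450, 456, 460, 465, 504, 506, 516, 540, 546, 560, 561, 562, 563, 564, 604, 605, 615, 640,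
    645, 650, 651, 652, 653, 654],
    [045, 046, 051, 052, 053, 054, 056, 061, 063, 064, 065, 152, 154, 156, 162, 164, 165, 205,
    206, 253, 254, 256, 263, 265, 315, 316, 354, 356, 364, 365, 405, 406, 456, 465, 506, 516,
    526, 536, 546],
    [02564, 02654, 04516, 04536, 04561, 04651, 04653, 05164, 05263, 05362, 05364, 05461, 06152,
    06154, 06251, 06352, 06354, 06451, 06452, 06453, 15063, 15064, 15206, 15263, 15406, 15463,
    15604, 16045, 16052, 16053, 16054, 16205, 16253, 16254, 16405, 16453, 16504, 20546, 20563,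
    20564, 20653, 20654, 25046, 25164, 25364, 25406, 25463, 26045, 26054, 26154, 26405, 35046,
    35064, 35204, 35264, 35406, 35604, 36045, 36054, 36504, 40516, 40536, 45316, 46315, 54026],
    [012345, 012346, 012354, 012356, 012364, 012365, 012534, 012634, 015234, 015236, 015362,
    015432, 015436, 015632, 015634, 016234, 016235, 016325, 016432, 016435, 016532, 016534,
    043125, 043126, 043215, 043216, 045236, 046125, 051236, 053216, 123456, 123465, 123546,
    123645, 125346, 125436, 126345]⟩

/-- Search data on `8` vertices, forbidding `C₆` and `P₆` in colors `0` and `1`, from a `P₅` in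
color `1`. -/
def cert23 : Cert :=
  ⟨
    [(4, 7), (0, 7), (4, 6), (0, 6), (0, 4), (0, 5), (1, 5), (1, 6), (6, 7), (5, 6), (4, 5),
    (0, 2), (2, 5), (2, 6), (3, 5), (2, 7), (1, 4), (5, 7), (0, 3), (3, 7), (1, 3), (2, 4), (1,
    7), (3, 6)],
    [015, 016, 046, 047, 104, 105, 106, 215, 235, 250, 256, 260, 265, 345, 406, 407, 435, 516,
    615, 674, 760, 764],
    [025, 026, 045, 046, 047, 051, 052, 054, 056, 061, 064, 065, 067, 074, 076, 204, 205, 206,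
    207, 254, 256, 274, 354, 405, 406, 407, 456, 465, 467, 476, 506, 507, 526, 546, 547, 567,
    607, 647],
    [025467, 025476, 025647, 025674, 026514, 026547, 026745, 027654, 045167, 045267, 047615,
    051647, 052647],
    [012345, 012346, 012347, 012534, 014325, 015234, 015327, 016234, 234015, 234016, 432015,
    432016, 432105, 432106, 432107, 432156, 432165, 432167]⟩

/-- Search data on `8` vertices, forbidding `C₆` in colors `0` and `1`, from a `P₆` in color `1`. -/
def cert22 : Cert :=
  ⟨
    [(0, 5), (1, 5), (0, 7), (5, 7), (1, 7), (1, 6), (5, 6), (4, 7), (0, 4), (0, 6), (4, 6),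
    (2, 6), (3, 6), (2, 7), (3, 7), (0, 3), (2, 5), (0, 2), (1, 3), (6, 7), (1, 4), (3, 5), (2,
    4)],
    [015, 016, 017, 026, 027, 036, 037, 046, 047, 062, 063, 065, 072, 073, 075, 103, 104, 105,
    106, 107, 126, 127, 136, 137, 156, 157, 163, 206, 207, 215, 216, 217, 230, 236, 237, 250,
    260, 265, 270, 275, 316, 317, 326, 327, 340, 341, 346, 347, 360, 361, 370, 371, 406, 407,
    436, 437, 450, 456, 457, 516, 517, 526, 527, 540, 546, 547, 560, 562, 570, 572, 604, 605,
    615, 625, 627, 630, 637, 640, 651, 674, 704, 705, 715, 725, 726, 730, 736, 740, 750, 751,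
    764],
    [025, 026, 027, 036, 037, 051, 052, 056, 057, 061, 062, 065, 071, 072, 075, 162, 164, 165,
    172, 174, 256, 257, 263, 265, 273, 275, 305, 306, 307, 314, 316, 317, 364, 365, 367, 374,
    375, 405, 465, 475, 506, 507, 526, 527, 567, 607, 617, 627, 637, 647, 657],
    [025164, 025174, 025647, 025716, 025746, 026157, 026174, 026175, 026375, 026473, 026475,
    026714, 027156, 027164, 027165, 027365, 027463, 027465, 027614, 031675, 031756, 031765,
    036157, 036174, 036175, 036257, 036274, 036275, 036475, 036517, 036527, 036574, 036715,
    037156, 037164, 037165, 037256, 037264, 037265, 037465, 037516, 037526, 037564, 037615,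
    046137, 046157, 046175, 046257, 046275, 046315, 046317, 046375, 046517, 046527, 046715,
    047136, 047156, 047165, 047256, 047265, 047315, 047316, 047365, 047516, 047526, 047615,
    051627, 051637, 051647, 051726, 051736, 051746, 052617, 052637, 052647, 052716, 052736,
    052746, 136527, 137465, 137526, 152647, 152746],
    [012345, 012346, 012347, 012364, 012367, 012374, 012376, 012543, 012634, 012637, 012643,
    012654, 012657, 012734, 012736, 012743, 012754, 012756, 013452, 013462, 014326, 015234,
    015432, 015436, 015437, 015623, 015634, 015723, 015726, 015734, 016234, 016237, 016273,
    016327, 016372, 016432, 016437, 016457, 017234, 017236, 017263, 017326, 017432, 017436,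
    017456, 023456, 023457, 023654, 023754, 032154, 032156, 032157, 032164, 032174, 032617,
    032716, 034516, 034517, 034617, 034716, 043126, 043216, 043217, 043257, 043276, 043657,
    045126, 045127, 045236, 046127, 046237, 047126, 047236, 061237, 062137, 062157, 063127,
    063217, 063457, 065127, 065437, 123456, 123457, 123465, 123475, 123645, 123647, 123654,
    123745, 123746, 123754, 125436, 125437, 125463, 125473, 126345, 126437, 126543, 126547,
    127345, 127436, 127543, 127546, 132546, 132547, 152346, 152347, 154326, 154327, 156237,
    156347, 157236, 157346, 162347, 164327, 234567, 234576, 234657, 234756, 236457, 236475,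
    236547, 237456, 237465, 237546, 254367, 254376, 254637, 254736, 263457, 265437]⟩
theorem run00 : run 3 0 0 (List.range 0) cert00 = true := by decide +kernel

theorem run10 : run 5 1 0 (List.range 0) cert10 = true := by decide +kernel

theorem run20 : run 6 2 0 (List.range 0) cert20 = true := by decide +kernel

theorem run11 : run 6 1 1 (List.range 3) cert11 = true := by decide +kernel

theorem run12 : run 7 1 2 (List.range 5) cert12 = true := by decide +kernel

theorem run23 : run 8 2 3 (List.range 5) cert23 = true := by decide +kernel

theorem run22 : run 8 2 2 (List.range 6) cert22 = true := by decide +kernel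

/-! ### Three-colorings in which the third color is a matching -/

/-- The edge color `0` and `1` exchanged. -/
def swap (i : ℕ) : ℕ := if i = 0 then 1 else if i = 1 then 0 else i

theorem swap_eq_iff (i j : ℕ) : swap i = j ↔ i = swap j := by
  unfold swap; grind

theorem has_swap {V : Type*} {c : V → V → ℕ} {S : Finset V} {j m : ℕ}
    (h : Has (fun x y => swap (c x y)) S j m) : Has c S (swap j) m := by
  obtain ⟨p, h1, h2, h3, h4⟩ := h
  refine ⟨p, h1, h2, h3, ?_⟩
  simpa only [swap_eq_iff] using h4

/-- One of the graphs with indices `a` in color `0`, `b` in color `1`, or `P₃` in color `2` appears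
in every set of at least `n` vertices of every Gallai coloring with colors `0`, `1`, `2`. -/
def Forced (n a b : ℕ) : Prop :=
  ∀ (V : Type) [DecidableEq V] (c : V → V → ℕ), (∀ x y, c x y = c y x) → (∀ x y, c x y < 3) →
    NoRainbow c → ∀ S : Finset V, n ≤ S.card → Has c S 0 a ∨ Has c S 1 b ∨ Has c S 2 0

theorem Forced.swap {n a b : ℕ} (h : Forced n a b) : Forced n b a := by
  intro V _ c hsym hlt hg S hS
  have := h V (fun x y => GallaiRamsey.swap (c x y)) (fun x y => by rw [hsym])
    (fun x y => by have := hlt x y; unfold GallaiRamsey.swap; grind)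
    (fun x y z h1 h2 h3 => by rcases hg x y z h1 h2 h3 with h | h | h <;> simp [h]) S hS
  rcases this with h | h | h
  · exact .inr (.inl (has_swap h))
  · exact .inl (has_swap h)
  · exact .inr (.inr (has_swap h))

theorem Forced.mono {n n' a b : ℕ} (h : Forced n a b) (hn : n ≤ n') : Forced n' a b :=
  fun V _ c hsym hlt hg S hS => h V c hsym hlt hg S (hn.trans hS)

theorem forced_of_run {n a b : ℕ} (hn : n ≤ 8) (hn0 : 0 < n) {C : Cert}
    (hrun : run n a b (List.range 0) C = true) : Forced n a b :=
  fun _ _ _ hsym hlt hg _ hS => search_sound hsym hlt hg hn hn0 hS List.nodup_nil (by simp)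
    List.isChain_nil (Nat.zero_le n) C hrun

/-- A path with index `m ≠ 2` known to be forced in color `1` may serve as the start of a search. -/
theorem Forced.step {n a b m : ℕ} (hm : m ≠ 2) (h : Forced n a m) (hn : n ≤ 8)
    (hmn : order m ≤ n) {C : Cert} (hrun : run n a b (List.range (order m)) C = true) :
    Forced n a b := by
  intro V _ c hsym hlt hg S hS
  rcases h V c hsym hlt hg S hS with h | ⟨q, hq, hnd, hqS, hc⟩ | h
  · exact .inl h
  · have hcl : closeUp m q = q := by
      rcases m with _ | _ | _ | m <;> first | exact absurd rfl hm | (cases q <;> rfl)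
    rw [hcl] at hc
    have h0 : 0 < order m := by rcases m with _ | _ | m <;> simp [order]
    rw [← hq] at hrun
    exact search_sound hsym hlt hg hn (h0.trans_le hmn) hS hnd hqS hc (by omega) C hrun
  · exact .inr (.inr h)

theorem forced00 : Forced 3 0 0 := forced_of_run (by norm_num) (by norm_num) run00

theorem forced10 : Forced 5 1 0 := forced_of_run (by norm_num) (by norm_num) run10

theorem forced20 : Forced 6 2 0 := forced_of_run (by norm_num) (by norm_num) run20

theorem forced11 : Forced 6 1 1 :=
  (forced10.mono (by norm_num)).step (by norm_num) (by norm_num) (by norm_num [order]) run11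

theorem forced12 : Forced 7 1 2 :=
  (forced11.mono (by norm_num)).step (by norm_num) (by norm_num) (by norm_num [order]) run12

theorem forced22 : Forced 8 2 2 :=
  (((forced12.swap.mono (by norm_num)).step (by norm_num) (by norm_num) (by norm_num [order])
    run23).step (by norm_num) (by norm_num) (by norm_num [order]) run22)

/-- The two-weight case of the bound, with a third color that is a matching. -/
theorem forced {a b : ℕ} (ha : a ≤ 2) (hb : b ≤ 2) : Forced (a + b + 4) a b := by
  interval_cases a <;> interval_cases b
  · exact forced00.mono (by norm_num)
  · exact forced10.swap
  · exact forced20.swap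
  · exact forced10
  · exact forced11
  · exact forced12
  · exact forced20
  · exact forced12.swap
  · exact forced22
/-! ### Color components and Gallai's theorem -/

section Components

variable {V K : Type*} {c : V → V → K} {S : Finset V} {j : K}

open Classical in
/-- The component of `x` in the graph of the edges of color `j` inside `S`. -/
noncomputable def comp (c : V → V → K) (j : K) (S : Finset V) (x : V) : Finset V :=
  S.filter fun y => Relation.ReflTransGen (fun u v => v ∈ S ∧ c u v = j) x y

/-- Color `j` is connected and spanning on `S`. -/
def Conn (c : V → V → K) (j : K) (S : Finset V) : Prop := ∀ x ∈ S, comp c j S x = S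

theorem mem_comp {x y : V} : y ∈ comp c j S x ↔
    y ∈ S ∧ Relation.ReflTransGen (fun u v => v ∈ S ∧ c u v = j) x y := by
  simp [comp]

theorem comp_subset (x : V) : comp c j S x ⊆ S := fun _ hy => (mem_comp.1 hy).1

theorem self_mem_comp {x : V} (hx : x ∈ S) : x ∈ comp c j S x := mem_comp.2 ⟨hx, .refl⟩

theorem comp_closed {x y z : V} (hy : y ∈ comp c j S x) (hz : z ∈ S) (h : c y z = j) :
    z ∈ comp c j S x :=
  mem_comp.2 ⟨hz, (mem_comp.1 hy).2.tail ⟨hz, h⟩⟩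

/-- Induction along a component. -/
theorem comp_induction {x : V} (hx : x ∈ S) {P : V → Prop} (h0 : P x)
    (hstep : ∀ u ∈ comp c j S x, ∀ v ∈ comp c j S x, c u v = j → P u → P v) :
    ∀ y ∈ comp c j S x, P y := by
  intro y hy
  obtain ⟨-, hr⟩ := mem_comp.1 hy
  have : y ∈ comp c j S x ∧ P y := by
    clear hy
    induction hr with
    | refl => exact ⟨self_mem_comp hx, h0⟩
    | tail _ h ih =>
      have hv := comp_closed ih.1 h.1 h.2
      exact ⟨hv, hstep _ ih.1 _ hv h.2 ih.2⟩
  exact this.2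

theorem comp_eq_of_mem (hsym : ∀ x y, c x y = c y x) {x y : V} (hx : x ∈ S)
    (hy : y ∈ comp c j S x) : comp c j S y = comp c j S x := by
  have hyS := comp_subset x hy
  have h1 : ∀ z ∈ comp c j S x, x ∈ comp c j S z :=
    comp_induction hx (self_mem_comp hx) fun u hu v hv huv hxu => by
      have huS := comp_subset x hu
      have hvS := comp_subset x hv
      have : u ∈ comp c j S v := comp_closed (self_mem_comp hvS) huS (by rw [hsym, huv])
      exact mem_comp.2 ⟨hx, (mem_comp.1 this).2.trans (mem_comp.1 hxu).2⟩
  ext z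
  constructor
  · intro hz
    exact mem_comp.2 ⟨comp_subset y hz, (mem_comp.1 hy).2.trans (mem_comp.1 hz).2⟩
  · intro hz
    exact mem_comp.2 ⟨comp_subset x hz, (mem_comp.1 (h1 y hy)).2.trans (mem_comp.1 hz).2⟩

/-- In a Gallai coloring a vertex outside a color component sees the whole component in a single
color. -/
theorem comp_module (hsym : ∀ x y, c x y = c y x) (hg : NoRainbow c) {x z : V} (hx : x ∈ S)
    (hz : z ∈ S) (hzx : z ∉ comp c j S x) : ∀ y ∈ comp c j S x, c z y = c z x := by
  refine comp_induction hx rfl fun u hu v hv huv h => ?_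
  rw [← h]
  by_cases huv' : u = v
  · rw [huv']
  have hzu : c u z ≠ j := fun h => hzx (comp_closed hu hz h)
  have hzv : c v z ≠ j := fun h => hzx (comp_closed hv hz h)
  rw [hsym] at hzu hzv
  rcases hg z u v (fun h => hzx (h ▸ hu)) huv' (fun h => hzx (h ▸ hv)) with h' | h' | h'
  · exact absurd (h'.trans huv) hzu
  · exact absurd (h'.symm.trans huv) hzv
  · exact h'.symm

theorem comp_ne_of_not_conn (hsym : ∀ x y, c x y = c y x) (h : ¬ Conn c j S) {x : V}
    (hx : x ∈ S) : comp c j S x ≠ S := by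
  intro hxS
  refine h fun y hy => ?_
  rw [← hxS] at hy
  rw [comp_eq_of_mem hsym hx hy, hxS]

theorem Conn.exists_crossing (h : Conn c j S) {A : Finset V} {x y : V} (hx : x ∈ S) (hxA : x ∈ A)
    (hy : y ∈ S) (hyA : y ∉ A) : ∃ u ∈ S, u ∈ A ∧ ∃ v ∈ S, v ∉ A ∧ c u v = j := by
  by_contra! hno
  refine hyA (comp_induction (c := c) (j := j) (P := fun z => z ∈ A) hx hxA ?_ y
    (by rw [h x hx]; exact hy))
  intro u hu v hv huv hu'
  by_contra hv'
  exact hno u (comp_subset x hu) hu' v (comp_subset x hv) hv' huv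

/-- The inductive step of Gallai's theorem: if `r`, `b`, `g` are connected on `S` but `r` is
disconnected after deleting `v`, then `v` sends an edge of color `r` to each `r`-component of the
rest. This forces the color of edges from those components to a `b`-neighbor and to a
`g`-neighbor of `v`, and the two requirements clash. -/
theorem gallai_step [DecidableEq V] (hsym : ∀ x y, c x y = c y x) (hg : NoRainbow c) {v : V}
    (hv : v ∈ S) {r b g : K} (hrb : r ≠ b) (hrg : r ≠ g) (hbg : b ≠ g) (hr : Conn c r S)
    (hb : Conn c b S) (hg' : Conn c g S) (hT : ¬ Conn c r (S.erase v)) : False := by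
  have hTne : (S.erase v).Nonempty := by
    by_contra h
    rw [Finset.not_nonempty_iff_eq_empty] at h
    exact hT fun x hx => by simp [h] at hx
  obtain ⟨t, ht⟩ := hTne
  have htS := Finset.mem_of_mem_erase ht
  have nbr : ∀ {k}, Conn c k S → ∃ x ∈ S.erase v, c v x = k := by
    intro k hk
    obtain ⟨u, -, hu, w, hw, hwv, huw⟩ := hk.exists_crossing (A := {v}) hv (by simp) htS
      (by simpa using Finset.ne_of_mem_erase ht)
    rw [Finset.mem_singleton] at hu hwv
    exact ⟨w, Finset.mem_erase.2 ⟨hwv, hw⟩, hu ▸ huw⟩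
  have red : ∀ x ∈ S.erase v, ∃ y ∈ comp c r (S.erase v) x, c v y = r := by
    intro x hx
    obtain ⟨u, -, hu, w, hw, hwA, huw⟩ := hr.exists_crossing (A := comp c r (S.erase v) x)
      (Finset.mem_of_mem_erase hx) (self_mem_comp hx) hv
      (fun h => by simpa using comp_subset x h)
    have hwv : w = v := by
      by_contra hwv
      exact hwA (comp_closed hu (Finset.mem_erase.2 ⟨hwv, hw⟩) huw)
    exact ⟨u, hu, by rw [hsym, ← hwv, huw]⟩
  -- a `k`-neighbor `x` of `v` and an `r`-neighbor `y` in another component are joined by color `k`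
  have tri : ∀ {k x y}, r ≠ k → x ∈ S.erase v → c v x = k → y ∈ S.erase v → c v y = r →
      y ∉ comp c r (S.erase v) x → c x y = k := by
    intro k x y hk hx hvx hy hvy hyx
    have hxy : c x y ≠ r := fun h => hyx (comp_closed (self_mem_comp hx) hy h)
    rcases hg v x y (Finset.ne_of_mem_erase hx).symm
      (fun h => hyx (h ▸ self_mem_comp hx)) (Finset.ne_of_mem_erase hy).symm with h | h | h
    · rw [← h, hvx]
    · exact absurd (h.trans hvy) hxy
    · exact absurd (hvy.symm.trans (h.symm.trans hvx)) hk
  obtain ⟨x, hx, hvx⟩ := nbr hb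
  obtain ⟨z, hz, hvz⟩ := nbr hg'
  have hsub : ∀ {w y}, y ∈ comp c r (S.erase v) w → y ∈ S.erase v := fun h => comp_subset _ h
  by_cases hxz : z ∈ comp c r (S.erase v) x
  · have hne := comp_ne_of_not_conn hsym hT hx
    obtain ⟨u, hu, hux⟩ : ∃ u ∈ S.erase v, u ∉ comp c r (S.erase v) x := by
      by_contra! hall
      exact hne (Finset.Subset.antisymm (comp_subset x) hall)
    obtain ⟨y, hy, hvy⟩ := red u hu
    have hyx : y ∉ comp c r (S.erase v) x := fun h => hux (by
      rw [← comp_eq_of_mem hsym hx h, comp_eq_of_mem hsym hu hy]; exact self_mem_comp hu)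
    have h1 := tri hrb hx hvx (hsub hy) hvy hyx
    have h2 := tri hrg hz hvz (hsub hy) hvy (by rwa [comp_eq_of_mem hsym hx hxz])
    have h3 := comp_module hsym hg hx (hsub hy) hyx z hxz
    rw [hsym, h2, hsym, h1] at h3
    exact hbg h3.symm
  · have hzx : x ∉ comp c r (S.erase v) z := fun h => hxz (by
      rw [comp_eq_of_mem hsym hz h]; exact self_mem_comp hz)
    have disj : ∀ y ∈ comp c r (S.erase v) z, y ∉ comp c r (S.erase v) x := fun y hy h => hxz (by
      rw [← comp_eq_of_mem hsym hx h, comp_eq_of_mem hsym hz hy]; exact self_mem_comp hz)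
    obtain ⟨y, hy, hvy⟩ := red z hz
    obtain ⟨y', hy', hvy'⟩ := red x hx
    have h1 := tri hrb hx hvx (hsub hy) hvy (disj y hy)
    have h2 := tri hrg hz hvz (hsub hy') hvy' (fun h => disj y' h hy')
    have h3 := comp_module hsym hg hz hx hzx y hy
    have h4 := comp_module hsym hg hx hz hxz y' hy'
    rw [h1] at h3
    rw [h2, hsym] at h4
    exact hbg (h3.trans h4.symm)

/-- Gallai's theorem: on at least two vertices, no three colors of a Gallai coloring are
connected. -/
theorem gallai_theorem [DecidableEq V] (hsym : ∀ x y, c x y = c y x) (hg : NoRainbow c)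
    {r b g : K} (hrb : r ≠ b) (hrg : r ≠ g) (hbg : b ≠ g) : ∀ (n : ℕ) (S : Finset V),
    S.card = n + 2 → Conn c r S → Conn c b S → Conn c g S → False := by
  intro n
  induction n with
  | zero =>
    intro S hS hr hb _
    obtain ⟨x, y, hxy, rfl⟩ := Finset.card_eq_two.1 hS
    have : ∀ k, Conn c k {x, y} → c x y = k := by
      intro k hk
      obtain ⟨u, -, hu, w, hw, hwx, huw⟩ := hk.exists_crossing (A := {x}) (x := x) (y := y)
        (by simp) (by simp) (by simp) (by simpa using hxy.symm)
      simp only [Finset.mem_singleton, Finset.mem_insert] at hu hw hwx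
      rw [← huw, hu, hw.resolve_left hwx]
    exact hrb ((this r hr).symm.trans (this b hb))
  | succ n ih =>
    intro S hS hr hb hg'
    obtain ⟨v, hv⟩ : S.Nonempty := Finset.card_pos.1 (by omega)
    by_cases h1 : Conn c r (S.erase v)
    · by_cases h2 : Conn c b (S.erase v)
      · by_cases h3 : Conn c g (S.erase v)
        · exact ih _ (by rw [Finset.card_erase_of_mem hv, hS]; omega) h1 h2 h3
        · exact gallai_step hsym hg hv hrg.symm hbg.symm hrb hg' hr hb h3
      · exact gallai_step hsym hg hv hrb.symm hbg hrg hb hr hg' h2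
    · exact gallai_step hsym hg hv hrb hrg hbg hr hb hg' h1

end Components


/-! ### The upper bound -/

section Bound

variable {V K : Type*} {c : V → V → K} {S : Finset V} {j : K}

theorem Has.mono {S' : Finset V} {m : ℕ} (h : Has c S j m) (hS : S ⊆ S') : Has c S' j m := by
  obtain ⟨p, h1, h2, h3, h4⟩ := h
  exact ⟨p, h1, h2, fun v hv => hS (h3 v hv), h4⟩

/-- If more than `m` vertices are joined in color `j` to at least three others, an alternating
path or cycle gives the graph with index `m`. -/
theorem has_of_join {M R : Finset V} (hM : M ⊆ S) (hR : R ⊆ S)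
    (hMR : ∀ x ∈ M, x ∉ R) (hj : ∀ x ∈ M, ∀ z ∈ R, c x z = j ∧ c z x = j) {m : ℕ} (hm : m ≤ 2)
    (hM3 : 3 ≤ M.card) (hmR : m < R.card) : Has c S j m := by
  classical
  obtain ⟨x₁, x₂, x₃, h₁, h₂, h₃, h₁₂, h₁₃, h₂₃⟩ := Finset.two_lt_card_iff.1 hM3
  have ne : ∀ x ∈ M, ∀ z ∈ R, x ≠ z ∧ z ≠ x := fun x hx z hz =>
    ⟨fun h => hMR x hx (h ▸ hz), fun h => hMR x hx (h ▸ hz)⟩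
  interval_cases m
  · obtain ⟨z, hz⟩ := Finset.card_pos.1 hmR
    exact ⟨[x₁, z, x₂], rfl, by simp [ne _ h₁ _ hz, ne _ h₂ _ hz, h₁₂],
      by simp [hM h₁, hM h₂, hR hz], by simp [closeUp, hj _ h₁ _ hz, hj _ h₂ _ hz]⟩
  · obtain ⟨z, z', hz, hz', hzz⟩ := Finset.one_lt_card_iff.1 hmR
    exact ⟨[x₁, z, x₂, z', x₃], rfl, by
      simp [ne _ h₁ _ hz, ne _ h₂ _ hz, ne _ h₃ _ hz, ne _ h₁ _ hz', ne _ h₂ _ hz', ne _ h₃ _ hz',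
        h₁₂, h₁₃, h₂₃, hzz],
      by simp [hM h₁, hM h₂, hM h₃, hR hz, hR hz'], by
      simp [closeUp, hj _ h₁ _ hz, hj _ h₂ _ hz, hj _ h₂ _ hz', hj _ h₃ _ hz']⟩
  · obtain ⟨z, z', z'', hz, hz', hz'', hzz, hzz'', hzz'⟩ := Finset.two_lt_card_iff.1 hmR
    exact ⟨[x₁, z, x₂, z', x₃, z''], rfl, by
      simp [ne _ h₁ _ hz, ne _ h₂ _ hz, ne _ h₃ _ hz, ne _ h₁ _ hz', ne _ h₂ _ hz', ne _ h₃ _ hz',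
        ne _ h₁ _ hz'', ne _ h₂ _ hz'', ne _ h₃ _ hz'', h₁₂, h₁₃, h₂₃, hzz, hzz', hzz''],
      by simp [hM h₁, hM h₂, hM h₃, hR hz, hR hz', hR hz''], by
      simp [closeUp, hj _ h₁ _ hz, hj _ h₂ _ hz, hj _ h₂ _ hz', hj _ h₃ _ hz', hj _ h₃ _ hz'',
        hj _ h₁ _ hz'']⟩

/-- Joining the vertices of `R` in color `j` to a set of at least four vertices raises the index
of a graph found in that set by `|R|`. -/
theorem has_of_join_of_has {M R : Finset V} (hM : M ⊆ S) (hR : R ⊆ S)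
    (hMR : ∀ x ∈ M, x ∉ R) (hj : ∀ x ∈ M, ∀ z ∈ R, c x z = j ∧ c z x = j) {m : ℕ} (hm : m ≤ 2)
    (hM4 : 4 ≤ M.card) (hRm : R.card ≤ m) (h : Has c M j (m - R.card)) : Has c S j m := by
  classical
  have ne : ∀ x ∈ M, ∀ z ∈ R, x ≠ z ∧ z ≠ x := fun x hx z hz =>
    ⟨fun h => hMR x hx (h ▸ hz), fun h => hMR x hx (h ▸ hz)⟩
  obtain hR0 | hR0 := Nat.eq_zero_or_pos R.card
  · rw [hR0] at h
    exact h.mono hM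
  -- three vertices of a path `P₃` in `M`, and a fourth vertex of `M`
  have four : Has c M j 0 → ∃ x ∈ M, ∃ y ∈ M, ∃ z ∈ M, ∃ e ∈ M, x ≠ y ∧ x ≠ z ∧ y ≠ z ∧
      x ≠ e ∧ y ≠ e ∧ z ≠ e ∧ c x y = j ∧ c y z = j := by
    rintro ⟨p, h1, h2, h3, h4⟩
    obtain ⟨x, y, z, rfl⟩ := List.length_eq_three.1 h1
    obtain ⟨e, he, hne⟩ := Finset.exists_mem_notMem_of_card_lt_card (s := {x, y, z}) (t := M)
      (Finset.card_le_three.trans_lt hM4)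
    simp only [List.nodup_cons, List.mem_cons, List.not_mem_nil, or_false, not_or] at h2
    simp only [closeUp, List.isChain_cons_cons] at h4
    simp only [Finset.mem_insert, Finset.mem_singleton, not_or] at hne
    exact ⟨x, h3 x (by simp), y, h3 y (by simp), z, h3 z (by simp), e, he, h2.1.1, h2.1.2, h2.2.1,
      Ne.symm hne.1, Ne.symm hne.2.1, Ne.symm hne.2.2, h4.1, h4.2.1⟩
  obtain ⟨z, hz⟩ := Finset.card_pos.1 hR0
  obtain ⟨rfl, hR1⟩ | ⟨rfl, hR1⟩ | ⟨rfl, hR2⟩ :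
      (m = 1 ∧ R.card = 1) ∨ (m = 2 ∧ R.card = 1) ∨ (m = 2 ∧ R.card = 2) := by omega
  · rw [hR1] at h
    obtain ⟨a, ha, b, hb, d, hd, e, he, hab, had, hbd, hae, hbe, hde, h1, h2⟩ := four h
    exact ⟨[a, b, d, z, e], rfl, by
      simp [ne _ ha _ hz, ne _ hb _ hz, ne _ hd _ hz, ne _ he _ hz, *],
      by simp [hM ha, hM hb, hM hd, hM he, hR hz], by
      simp [closeUp, hj _ hd _ hz, hj _ he _ hz, *]⟩
  · rw [hR1] at h
    obtain ⟨p, h1, h2, h3, h4⟩ := h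
    match p, h1 with
    | [a, b, d, e, f], _ =>
      simp only [List.forall_mem_cons] at h3
      obtain ⟨ha, hb, hd, he, hf, -⟩ := h3
      simp only [List.nodup_cons, List.mem_cons, List.not_mem_nil, or_false, not_or] at h2
      simp only [closeUp, List.isChain_cons_cons] at h4
      exact ⟨[a, b, d, e, f, z], rfl, by
        simp [ne _ ha _ hz, ne _ hb _ hz, ne _ hd _ hz, ne _ he _ hz, ne _ hf _ hz, h2],
        by simp [hM ha, hM hb, hM hd, hM he, hM hf, hR hz], by
        simp [closeUp, hj _ ha _ hz, hj _ hf _ hz, h4]⟩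
  · rw [hR2] at h
    obtain ⟨z, z', hz, hz', hzz⟩ := Finset.one_lt_card_iff.1 (by omega : 1 < R.card)
    obtain ⟨a, ha, b, hb, d, hd, e, he, hab, had, hbd, hae, hbe, hde, h1, h2⟩ := four h
    exact ⟨[a, b, d, z, e, z'], rfl, by
      simp [ne _ ha _ hz, ne _ hb _ hz, ne _ hd _ hz, ne _ he _ hz, ne _ ha _ hz', ne _ hb _ hz',
        ne _ hd _ hz', ne _ he _ hz', *],
      by simp [hM ha, hM hb, hM hd, hM he, hR hz, hR hz'], by
      simp [closeUp, hj _ hd _ hz, hj _ he _ hz, hj _ he _ hz', hj _ ha _ hz', *]⟩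

/-- Among three vertices of a Gallai coloring two edges share a color. -/
theorem exists_has_zero (hsym : ∀ x y, c x y = c y x) (hg : NoRainbow c) (hS : 2 < S.card) :
    ∃ j, Has c S j 0 := by
  classical
  obtain ⟨x, y, z, hx, hy, hz, hxy, hxz, hyz⟩ := Finset.two_lt_card_iff.1 hS
  rcases hg x y z hxy hyz hxz with h | h | h
  · exact ⟨_, [x, y, z], rfl, by simp [*], by simp [*], by simp [closeUp]; exact ⟨rfl, h.symm⟩⟩
  · exact ⟨_, [y, z, x], rfl, by simp [*, Ne.symm hxy, Ne.symm hxz], by simp [*],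
      by simp [closeUp]; exact ⟨rfl, by rw [hsym, h]⟩⟩
  · exact ⟨_, [y, x, z], rfl, by simp [*, Ne.symm hxy], by simp [*],
      by simp [closeUp]; exact ⟨rfl, by rw [← h, hsym]⟩⟩

/-- If no module of `S` has at least three vertices, then the edges of the colors that are not
connected on `S` form a matching: no two of them meet. -/
theorem no_adjacent_of_not_conn [DecidableEq V] (hsym : ∀ x y, c x y = c y x) (hg : NoRainbow c)
    (hS : 3 < S.card)
    (hmod : ∀ M ⊆ S, 3 ≤ M.card → M ≠ S →
      (∀ z ∈ S, z ∉ M → ∀ x ∈ M, ∀ y ∈ M, c z x = c z y) → False)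
    {x y z : V} (hx : x ∈ S) (hy : y ∈ S) (hz : z ∈ S) (hxy : x ≠ y) (hyz : y ≠ z) (hxz : x ≠ z)
    (h1 : ¬ Conn c (c x y) S) (h2 : ¬ Conn c (c y z) S) : False := by
  have small : ∀ u ∈ S, ∀ v ∈ S, u ≠ v → ¬ Conn c (c u v) S →
      comp c (c u v) S u = {u, v} := by
    intro u hu v hv huv hn
    refine (Finset.eq_of_subset_of_card_le ?_ ?_).symm
    · intro t ht
      rcases Finset.mem_insert.1 ht with rfl | ht
      · exact self_mem_comp hu
      · rw [Finset.mem_singleton.1 ht]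
        exact comp_closed (self_mem_comp hu) hv rfl
    · rw [Finset.card_pair huv]
      by_contra! h
      refine hmod _ (comp_subset u) h (comp_ne_of_not_conn hsym hn hu) fun t ht htu a ha b hb => ?_
      rw [comp_module hsym hg hu ht htu a ha, comp_module hsym hg hu ht htu b hb]
  have e1 := small x hx y hy hxy h1
  have e2 := small y hy z hz hyz h2
  have hc3 : ({x, y, z} : Finset V).card = 3 := Finset.card_eq_three.2 ⟨x, y, z, hxy, hxz, hyz, rfl⟩
  refine hmod {x, y, z} ?_ hc3.ge ?_ ?_
  · intro t ht
    simp only [Finset.mem_insert, Finset.mem_singleton] at ht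
    rcases ht with rfl | rfl | rfl <;> assumption
  · intro h
    rw [← h, hc3] at hS
    exact lt_irrefl _ hS
  · intro t ht htM
    simp only [Finset.mem_insert, Finset.mem_singleton, not_or] at htM
    have a1 := comp_module hsym hg hx ht (by rw [e1]; simp [htM]) y (by rw [e1]; simp)
    have a2 := comp_module hsym hg hy ht (by rw [e2]; simp [htM]) z (by rw [e2]; simp)
    have key : ∀ u ∈ ({x, y, z} : Finset V), c t u = c t y := by
      intro u hu
      simp only [Finset.mem_insert, Finset.mem_singleton] at hu
      rcases hu with rfl | rfl | rfl
      · exact a1.symm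
      · rfl
      · exact a2
    intro u hu v hv
    rw [key u hu, key v hv]

/-- All but two colors are disconnected. -/
theorem exists_two_colors [DecidableEq V] [Nontrivial K] (hsym : ∀ x y, c x y = c y x)
    (hg : NoRainbow c) (hS : 2 ≤ S.card) :
    ∃ r b : K, r ≠ b ∧ ∀ j, j ≠ r → j ≠ b → ¬ Conn c j S := by
  by_contra! h
  obtain ⟨r₀, b₀, hrb⟩ := exists_pair_ne K
  obtain ⟨j₁, -, -, h1⟩ := h r₀ b₀ hrb
  obtain ⟨x, hx⟩ := exists_ne j₁
  obtain ⟨j₂, h21, -, h2⟩ := h j₁ x hx.symm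
  obtain ⟨j₃, h31, h32, h3⟩ := h j₁ j₂ h21.symm
  exact gallai_theorem hsym hg h21.symm h31.symm h32.symm (S.card - 2) S (by omega) h1 h2 h3

end Bound

/-- A set avoiding, in each color `j`, the graph with index `w j` has at most `∑ w + 3` vertices,
and at most two if all the graphs are `P₃`. -/
theorem gallai_bound {V : Type} {K : Type*} [DecidableEq V] [Fintype K] [DecidableEq K]
    [Nontrivial K] {c : V → V → K} (hsym : ∀ x y, c x y = c y x) (hg : NoRainbow c) :
    ∀ (n : ℕ) (S : Finset V) (w : K → ℕ), S.card = n → (∀ j, w j ≤ 2) →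
      (∀ j, ¬ Has c S j (w j)) → S.card ≤ ∑ j, w j + 3 ∧ (∑ j, w j = 0 → S.card ≤ 2) := by
  intro n
  induction n using Nat.strong_induction_on with
  | _ n ih =>
  intro S w hn hw hno
  have hzero : ∑ j, w j = 0 → S.card ≤ 2 := by
    intro h0
    by_contra! hS
    obtain ⟨j, hj⟩ := exists_has_zero hsym hg hS
    have : w j = 0 := Finset.sum_eq_zero_iff.1 h0 j (Finset.mem_univ j)
    exact hno j (this ▸ hj)
  refine ⟨?_, hzero⟩
  by_contra! hbig
  have hpos : ∑ j, w j ≠ 0 := fun h => by have := hzero h; omega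
  have hS4 : S.card = ∑ j, w j + 4 := by
    by_contra hne
    obtain ⟨T, hTS, hT⟩ := Finset.exists_subset_card_eq (s := S) (n := ∑ j, w j + 4) (by omega)
    have := (ih T.card (by omega) T w rfl hw fun j h => hno j (h.mono hTS)).1
    omega
  have hmod : ∀ M ⊆ S, 3 ≤ M.card → M ≠ S →
      (∀ z ∈ S, z ∉ M → ∀ x ∈ M, ∀ y ∈ M, c z x = c z y) → False := by
    intro M hMS hM3 hMne hM
    obtain ⟨m₀, hm₀⟩ := Finset.card_pos.1 (by omega : 0 < M.card)
    set R : K → Finset V := fun j => (S \ M).filter fun z => c z m₀ = j with hRdef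
    have hRS : ∀ j, R j ⊆ S := fun j =>
      (Finset.filter_subset _ _).trans Finset.sdiff_subset
    have hMR : ∀ j, ∀ x ∈ M, x ∉ R j := by
      intro j x hx h
      exact (Finset.mem_sdiff.1 (Finset.mem_filter.1 h).1).2 hx
    have hjoin : ∀ j, ∀ x ∈ M, ∀ z ∈ R j, c x z = j ∧ c z x = j := by
      intro j x hx z hz
      obtain ⟨hz1, hz2⟩ := Finset.mem_filter.1 hz
      obtain ⟨hzS, hzM⟩ := Finset.mem_sdiff.1 hz1
      have := hM z hzS hzM x hx m₀ hm₀
      exact ⟨by rw [hsym, this, hz2], by rw [this, hz2]⟩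
    have hcard : S.card = M.card + ∑ j, (R j).card := by
      rw [← Finset.card_sdiff_add_card_eq_card hMS, add_comm]
      exact congrArg (M.card + ·) (Finset.card_eq_sum_card_fiberwise (s := S \ M)
        (f := fun z => c z m₀) (t := Finset.univ) (fun _ _ => Finset.mem_coe.2 (Finset.mem_univ _)))
    have hRw : ∀ j, (R j).card ≤ w j := by
      intro j
      by_contra! h
      exact hno j (has_of_join hMS (hRS j) (hMR j) (hjoin j) (hw j) hM3 h)
    have hsum : ∑ j, (R j).card + ∑ j, (w j - (R j).card) = ∑ j, w j := by
      rw [← Finset.sum_add_distrib]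
      exact Finset.sum_congr rfl fun j _ => by have := hRw j; omega
    have hlt : M.card < S.card := Finset.card_lt_card (Finset.ssubset_iff_subset_ne.2 ⟨hMS, hMne⟩)
    rcases hM3.eq_or_lt with h3 | h4
    · omega
    · have := (ih M.card (hn ▸ hlt) M (fun j => w j - (R j).card) rfl
        (fun j => (Nat.sub_le _ _).trans (hw j)) fun j h => hno j
          (has_of_join_of_has hMS (hRS j) (hMR j) (hjoin j) (hw j) h4 (hRw j) h)).1
      omega
  obtain ⟨r, b, hrb, hconn⟩ := exists_two_colors hsym hg (S := S) (by omega)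
  -- merge all disconnected colors into the single color `2`
  set φ : K → ℕ := fun j => if j = r then 0 else if j = b then 1 else 2 with hφ
  have hφ0 : ∀ j, φ j = 0 ↔ j = r := by intro j; simp only [hφ]; grind
  have hφ1 : ∀ j, φ j = 1 ↔ j = b := by intro j; simp only [hφ]; grind
  have hφ2 : ∀ j, φ j = 2 → j ≠ r ∧ j ≠ b := by intro j; simp only [hφ]; grind
  have hle : w r + w b ≤ ∑ j, w j := by
    rw [← Finset.sum_pair hrb]
    exact Finset.sum_le_sum_of_subset (Finset.subset_univ _)
  have hcopy : ∀ {i j m}, (∀ j', φ j' = i ↔ j' = j) → Has (fun x y => φ (c x y)) S i m →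
      Has c S j m := by
    rintro i j m hi ⟨p, h1, h2, h3, h4⟩
    exact ⟨p, h1, h2, h3, by simpa only [hi] using h4⟩
  rcases forced (hw r) (hw b) V (fun x y => φ (c x y)) (fun x y => by rw [hsym])
    (fun x y => by simp only [hφ]; grind)
    (fun x y z h1 h2 h3 => by rcases hg x y z h1 h2 h3 with h | h | h <;> simp [h]) S (by omega)
    with h | h | ⟨p, h1, h2, h3, h4⟩
  · exact hno r (hcopy hφ0 h)
  · exact hno b (hcopy hφ1 h)
  · obtain ⟨x, y, z, rfl⟩ := List.length_eq_three.1 h1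
    simp only [List.nodup_cons, List.mem_cons, List.not_mem_nil, or_false, not_or] at h2
    simp only [closeUp, List.isChain_cons_cons] at h4
    obtain ⟨a1, a2⟩ := hφ2 _ h4.1
    obtain ⟨a3, a4⟩ := hφ2 _ h4.2.1
    exact no_adjacent_of_not_conn hsym hg (by omega) hmod (h3 x (by simp)) (h3 y (by simp))
      (h3 z (by simp)) h2.1.1 h2.2.1 h2.1.2 (hconn _ a1 a2) (hconn _ a3 a4)


/-- A listed copy is a monochromatic copy in the sense of the statement. -/
theorem hasMonoCopy_of_has {N k m : ℕ} {c : Sym2 (Fin N) → Fin k} {S : Finset (Fin N)} {j : Fin k}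
    (hm : m ≤ 2) (h : Has (fun x y => c s(x, y)) S j m) : HasMonoCopy c (graphN3 m).2 j := by
  obtain ⟨p, h1, h2, -, h4⟩ := h
  have path : ∀ n, p.length = n → p.IsChain (fun u v => c s(u, v) = j) →
      HasMonoCopy c (SimpleGraph.pathGraph n) j := by
    rintro n rfl h
    refine ⟨p.get, List.nodup_iff_injective_get.1 h2, fun u v huv => ?_⟩
    rw [List.isChain_iff_getElem] at h
    obtain ⟨u, hu⟩ := u
    obtain ⟨v, hv⟩ := v
    rcases SimpleGraph.pathGraph_adj.1 huv with e | e
    · simp only at e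
      subst e
      exact h u hv
    · simp only at e
      subst e
      rw [Sym2.eq_swap]
      exact h v hu
  interval_cases m
  · exact path 3 h1 (by simpa [closeUp] using h4)
  · exact path 5 h1 (by simpa [closeUp] using h4)
  · refine ⟨fun u => p.get (u.cast h1.symm), ?_, ?_⟩
    · exact (List.nodup_iff_injective_get.1 h2).comp (Fin.cast_injective _)
    · match p, h1 with
      | [x₀, x₁, x₂, x₃, x₄, x₅], _ =>
        simp only [closeUp, List.cons_append, List.nil_append, List.isChain_cons_cons] at h4
        obtain ⟨a, b, d, e, f, g, -⟩ := h4
        intro u v huv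
        change (SimpleGraph.cycleGraph 6).Adj u v at huv
        change Fin 6 at u v
        fin_cases u <;> fin_cases v <;>
          first
          | exact absurd huv (by decide)
          | assumption
          | (rw [Sym2.eq_swap]; assumption)

/-! ### The lower bound -/

/-- The graph with index `m` contains the `m + 1` disjoint edges `s(2t, 2t+1)`, `t ≤ m`. -/
theorem graphN3_matching {m t : ℕ} (ht : t ≤ m) (hm : m ≤ 2) :
    ∃ u v : Fin (graphN3 m).1, (graphN3 m).2.Adj u v ∧ u.1 = 2 * t ∧ v.1 = 2 * t + 1 := by
  interval_cases m <;> interval_cases t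
  · exact ⟨(0 : Fin 3), (1 : Fin 3), by simp [graphN3, SimpleGraph.pathGraph_adj], rfl, rfl⟩
  · exact ⟨(0 : Fin 5), (1 : Fin 5), by simp [graphN3, SimpleGraph.pathGraph_adj], rfl, rfl⟩
  · exact ⟨(2 : Fin 5), (3 : Fin 5), by simp [graphN3, SimpleGraph.pathGraph_adj], rfl, rfl⟩
  · exact ⟨(0 : Fin 6), (1 : Fin 6), by simp [graphN3, SimpleGraph.cycleGraph_adj], rfl, rfl⟩
  · exact ⟨(2 : Fin 6), (3 : Fin 6), by simp [graphN3, SimpleGraph.cycleGraph_adj], rfl, rfl⟩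
  · exact ⟨(4 : Fin 6), (5 : Fin 6), by simp [graphN3, SimpleGraph.cycleGraph_adj], rfl, rfl⟩

theorem graphN3_exists_adj {m : ℕ} (hm : m ≤ 2) (u : Fin (graphN3 m).1) :
    ∃ v, (graphN3 m).2.Adj u v := by
  interval_cases m
  · change ∃ v, (SimpleGraph.pathGraph 3).Adj u v
    change Fin 3 at u
    revert u
    simp only [SimpleGraph.pathGraph_adj]
    decide
  · change ∃ v, (SimpleGraph.pathGraph 5).Adj u v
    change Fin 5 at u
    revert u
    simp only [SimpleGraph.pathGraph_adj]
    decide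
  · change ∃ v, (SimpleGraph.cycleGraph 6).Adj u v
    change Fin 6 at u
    revert u
    decide

/-- The coloring by the larger of two levels. -/
def levelColoring {N k : ℕ} (l : Fin N → Fin k) : Sym2 (Fin N) → Fin k :=
  Sym2.lift ⟨fun x y => max (l x) (l y), fun _ _ => max_comm _ _⟩

theorem isGallai_levelColoring {N k : ℕ} (l : Fin N → Fin k) : IsGallai (levelColoring l) := by
  intro x y z _ _ _
  simp only [levelColoring, Sym2.lift_mk]
  grind

/-- In the coloring by levels, a copy of the graph with index `m` in color `j` has more than `m`
vertices of level `j`, as each of `m + 1` disjoint edges contains one. -/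
theorem levelColoring_card {N k m : ℕ} {l : Fin N → Fin k} {j : Fin k} (hm : m ≤ 2)
    (h : HasMonoCopy (levelColoring l) (graphN3 m).2 j) :
    m < (Finset.univ.filter fun x => l x = j).card := by
  obtain ⟨f, hf, hadj⟩ := h
  have hex : ∀ t : Fin (m + 1), ∃ u : Fin (graphN3 m).1, u.1 / 2 = t.1 ∧ l (f u) = j := by
    intro t
    obtain ⟨u, v, huv, hu, hv⟩ := graphN3_matching (Nat.lt_succ_iff.1 t.2) hm
    have := hadj u v huv
    simp only [levelColoring, Sym2.lift_mk] at this
    rcases max_choice (l (f u)) (l (f v)) with h | h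
    · exact ⟨u, by omega, h ▸ this⟩
    · exact ⟨v, by omega, h ▸ this⟩
  choose g hg1 hg2 using hex
  have hinj : Function.Injective fun t => f (g t) := by
    intro s t hst
    have := congrArg (fun u => u.1 / 2) (hf hst)
    simp only [hg1] at this
    exact Fin.ext this
  have := Finset.card_le_card_of_injOn (s := Finset.univ) (t := Finset.univ.filter fun x => l x = j)
    (fun t => f (g t)) (fun t _ => by simp [hg2]) hinj.injOn
  rw [Finset.card_univ, Fintype.card_fin] at this
  exact this

/-- A copy of a graph in the smallest color lies within the lowest level. -/
theorem levelColoring_card_zero {N k m : ℕ} {l : Fin N → Fin k} {j : Fin k} (hj : ∀ i, j ≤ i)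
    (hm : m ≤ 2) (h : HasMonoCopy (levelColoring l) (graphN3 m).2 j) :
    (graphN3 m).1 ≤ (Finset.univ.filter fun x => l x = j).card := by
  obtain ⟨f, hf, hadj⟩ := h
  have hl : ∀ u, l (f u) = j := by
    intro u
    obtain ⟨v, huv⟩ := graphN3_exists_adj hm u
    have := hadj u v huv
    simp only [levelColoring, Sym2.lift_mk] at this
    exact le_antisymm (this ▸ le_max_left _ _) (hj _)
  have := Finset.card_le_card_of_injOn (s := Finset.univ) (t := Finset.univ.filter fun x => l x = j)
    f (fun t _ => by simp [hl]) hf.injOn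
  rwa [Finset.card_univ, Fintype.card_fin] at this

/-- At most `∑ a` vertices can be distributed to levels of sizes at most `a j`. -/
theorem exists_levels {N k : ℕ} (a : Fin k → ℕ) (h : N ≤ ∑ j, a j) :
    ∃ l : Fin N → Fin k, ∀ j, (Finset.univ.filter fun x => l x = j).card ≤ a j := by
  obtain ⟨e⟩ : Nonempty (Fin N ↪ Σ j, Fin (a j)) :=
    Function.Embedding.nonempty_of_card_le (by simpa using h)
  refine ⟨fun x => (e x).1, fun j => ?_⟩
  have := Finset.card_le_card_of_injOn (s := Finset.univ.filter fun x => (e x).1 = j)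
    (t := (Finset.univ : Finset (Fin (a j))).map ⟨Sigma.mk j, sigma_mk_injective⟩) e
    (fun x hx => by
      have hx : (e x).1 = j := by simpa using hx
      simp only [Finset.coe_map, Function.Embedding.coeFn_mk, Finset.coe_univ, Set.image_univ,
        Set.mem_range]
      exact ⟨hx ▸ (e x).2, by subst hx; rfl⟩) e.injective.injOn
  simpa using this

end GallaiRamsey

theorem stmt_3 (k : ℕ) (hk : 2 ≤ k) (i : Fin k → ℕ)
    (hanti : Antitone i) (hi1 : i ⟨0, by omega⟩ ≤ 2) :
    IsLeast {N | 0 < N ∧ GallaiRamseyProp (fun j => graphN3 (i j)) N}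
      ((graphN3 (i ⟨0, by omega⟩)).1 +
        ∑ j ∈ Finset.univ.erase (⟨0, by omega⟩ : Fin k), i j) := by
  have hi : ∀ j, i j ≤ 2 := fun j => (hanti (Fin.mk_le_of_le_val (Nat.zero_le _))).trans hi1
  have hsum := Finset.add_sum_erase Finset.univ i (Finset.mem_univ (⟨0, by omega⟩ : Fin k))
  set z : Fin k := ⟨0, by omega⟩ with hz
  have hz0 : ∀ j, z ≤ j := fun j => Fin.mk_le_of_le_val (Nat.zero_le _)
  have hcard : (graphN3 (i z)).1 = if i z = 0 then 3 else i z + 4 := by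
    have : ∀ m ≤ 2, (graphN3 m).1 = if m = 0 then 3 else m + 4 := by decide
    exact this _ hi1
  constructor
  · refine ⟨by rw [hcard]; split <;> omega, fun c hc => ?_⟩
    by_contra! hno
    have : Nontrivial (Fin k) := Fin.nontrivial_iff_two_le.2 hk
    have key := GallaiRamsey.gallai_bound (c := fun x y => c s(x, y))
      (fun x y => by rw [Sym2.eq_swap]) hc _ Finset.univ i rfl hi
      fun j h => hno j (GallaiRamsey.hasMonoCopy_of_has (hi j) h)
    rw [Finset.card_univ, Fintype.card_fin, hcard] at key
    split at key
    · have h0 : ∑ j, i j = 0 := Finset.sum_eq_zero fun j _ => by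
        have := hanti (hz0 j)
        omega
      have := key.2 h0
      omega
    · omega
  · rintro N ⟨-, hN⟩
    by_contra! hlt
    obtain ⟨l, hl⟩ := GallaiRamsey.exists_levels (N := N)
      (fun j => if j = z then (graphN3 (i z)).1 - 1 else i j) (by
        have hcongr : ∑ j ∈ Finset.univ.erase z, (if j = z then (graphN3 (i z)).1 - 1 else i j) =
            ∑ j ∈ Finset.univ.erase z, i j :=
          Finset.sum_congr rfl fun j hj => if_neg (Finset.ne_of_mem_erase hj)
        rw [← Finset.add_sum_erase _ _ (Finset.mem_univ z), if_pos rfl, hcongr]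
        omega)
    obtain ⟨j, hj⟩ := hN _ (GallaiRamsey.isGallai_levelColoring l)
    have hlj := hl j
    by_cases hjz : j = z
    · subst hjz
      have := GallaiRamsey.levelColoring_card_zero hz0 (hi _) hj
      have hpos : 0 < (graphN3 (i z)).1 := by rw [hcard]; split <;> omega
      rw [if_pos rfl] at hlj
      omega
    · have := GallaiRamsey.levelColoring_card (hi j) hj
      rw [if_neg hjz] at hlj
      omega
end
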